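/- arXiv:0802.0023 — 2 statements merged into one kernel-verified Lean document; each statement's English description precedes it below -/
import Mathlib

section
/- If the non-negative measures σ_{k,l}, k ∈ ℕ₀, l = 1,…,a_k, all have support in a compact interval [ρ,R] ⊂ [0,∞) and satisfy Σ_{k=0}^∞ Σ_{l=1}^{a_k} ∫_ρ^R r^{-k} dσ_{k,l}(r) < ∞, then the representing pseudo-positive signed measure σ of the functional T(f) := Σ_{k=0}^{deg f} Σ_{l=1}^{a_k} ∫_0^∞ f_{k,l}(r) r^{-k} dσ_{k,l}(r) can be chosen with support contained in the annulus {x ∈ ℝ^d : ρ ≤ |x| ≤ R}. -/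
open MeasureTheory MvPolynomial Metric
open scoped ComplexOrder ENNReal

noncomputable section

/-- `d`-dimensional Euclidean space. -/
abbrev E (d : ℕ) := EuclideanSpace ℝ (Fin d)

/-- The (surface) measure `dθ` on the unit sphere `S^{d-1}`. -/
noncomputable def sphMeas (d : ℕ) : Measure (sphere (0 : E d) 1) :=
  (volume : Measure (E d)).toSphere

/-- A bundled orthonormal basis `Y_{k,l}`, `l = 1,…,a_k`, of the spaces `H_k(ℝ^d)` of
real-valued harmonic polynomials homogeneous of degree `k`, orthonormal with respect to
`⟨f,g⟩ = ∫_{S^{d-1}} f g dθ`. -/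
structure HarmonicBasis (d : ℕ) where
  a : ℕ → ℕ
  Y : (k : ℕ) → Fin (a k) → MvPolynomial (Fin d) ℝ
  harmonic : ∀ k l, (∑ i, pderiv i (pderiv i (Y k l))) = 0
  homogeneous : ∀ k l, (Y k l).IsHomogeneous k
  orthonormal : ∀ (k k' : ℕ) (l : Fin (a k)) (l' : Fin (a k')),
    (∫ θ : sphere (0 : E d) 1,
        (eval (fun i => (θ : E d) i) (Y k l)) * (eval (fun i => (θ : E d) i) (Y k' l'))
      ∂(sphMeas d)) = if k = k' ∧ (l : ℕ) = (l' : ℕ) then 1 else 0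
  complete : ∀ (k : ℕ) (P : MvPolynomial (Fin d) ℝ),
    (∑ i, pderiv i (pderiv i P)) = 0 → P.IsHomogeneous k →
      P ∈ Submodule.span ℝ (Set.range (Y k))

/-- Evaluation of a complex polynomial in `d` variables at a point of `ℝ^d`. -/
def evalC {d : ℕ} (P : MvPolynomial (Fin d) ℂ) (x : E d) : ℂ :=
  eval (fun i => (x i : ℂ)) P

/-- The polynomial `|x|² = x₁² + … + x_d²`. -/
def normSqP (d : ℕ) : MvPolynomial (Fin d) ℂ := ∑ i, X i ^ 2

/-- Integral of a (complex- or real-valued) function with respect to a signed measure,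
via the Jordan decomposition. -/
noncomputable def sInt {α : Type*} {G : Type*} [MeasurableSpace α] [NormedAddCommGroup G]
    [NormedSpace ℝ G] (μ : SignedMeasure α) (f : α → G) : G :=
  (∫ x, f x ∂μ.toJordanDecomposition.posPart) - ∫ x, f x ∂μ.toJordanDecomposition.negPart

/-- A signed measure is a moment measure if every polynomial is integrable with respect to
its total variation. -/
def IsMomentMeasure {d : ℕ} (μ : SignedMeasure (E d)) : Prop :=
  ∀ P : MvPolynomial (Fin d) ℂ, Integrable (evalC P) μ.totalVariation

namespace HarmonicBasis

variable {d : ℕ} (B : HarmonicBasis d)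

/-- `Y_{k,l}` as a function on `ℝ^d`. -/
def Yf (k : ℕ) (l : Fin (B.a k)) (x : E d) : ℝ := eval (fun i => x i) (B.Y k l)

/-- `Y_{k,l}` as a complex polynomial. -/
def YC (k : ℕ) (l : Fin (B.a k)) : MvPolynomial (Fin d) ℂ :=
  (B.Y k l).map (algebraMap ℝ ℂ)

/-- The Laplace–Fourier coefficient `f_{k,l}(r) = ∫_{S^{d-1}} f(rθ) Y_{k,l}(θ) dθ`. -/
noncomputable def lfCoeff (f : E d → ℂ) (k : ℕ) (l : Fin (B.a k)) (r : ℝ) : ℂ :=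
  ∫ θ : sphere (0 : E d) 1, f (r • (θ : E d)) * (B.Yf k l (θ : E d) : ℂ) ∂(sphMeas d)

/-- `GaussDecomp B f K p` : `p` is a Gauss (Laplace–Fourier) decomposition of the polynomial
`f`, i.e. `f(x) = ∑_{k=0}^{K} ∑_{l=1}^{a_k} p_{k,l}(|x|²) Y_{k,l}(x)` with `p_{k,l} = 0` for
`k > K`. -/
def GaussDecomp (f : MvPolynomial (Fin d) ℂ) (K : ℕ)
    (p : (k : ℕ) → Fin (B.a k) → Polynomial ℂ) : Prop :=
  (∀ k, K < k → ∀ l, p k l = 0) ∧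
    f = ∑ k ∈ Finset.range (K + 1), ∑ l,
      Polynomial.aeval (normSqP d) (p k l) * B.YC k l

/-- The component functional `T_{k,l}(p) = T(p(|x|²) Y_{k,l}(x))`. -/
def component (T : MvPolynomial (Fin d) ℂ → ℂ) (k : ℕ) (l : Fin (B.a k))
    (p : Polynomial ℂ) : ℂ :=
  T (Polynomial.aeval (normSqP d) p * B.YC k l)

/-- A functional `T` on `ℂ[x₁,…,x_d]` is pseudo-positive definite (w.r.t. the basis `Y_{k,l}`)
if `T_{k,l}(p* p) ≥ 0` and `T_{k,l}(t · p*(t) p(t)) ≥ 0` for all univariate `p` and all `k, l`. -/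
def PPD (T : MvPolynomial (Fin d) ℂ → ℂ) : Prop :=
  ∀ (k : ℕ) (l : Fin (B.a k)) (p : Polynomial ℂ),
    0 ≤ B.component T k l (p.map (starRingEnd ℂ) * p) ∧
    0 ≤ B.component T k l (Polynomial.X * (p.map (starRingEnd ℂ) * p))

/-- A signed measure `μ` on `ℝ^d` is pseudo-positive (w.r.t. the basis `Y_{k,l}`) if
`∫ h(|x|) Y_{k,l}(x) dμ ≥ 0` for every non-negative continuous compactly supported `h`. -/
def PseudoPositive (μ : SignedMeasure (E d)) : Prop :=
  ∀ (k : ℕ) (l : Fin (B.a k)) (h : ℝ → ℝ), Continuous h → HasCompactSupport h →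
    (∀ t, 0 ≤ h t) → 0 ≤ sInt μ (fun x => h ‖x‖ * B.Yf k l x)

/-- `ν` is the family of component measures `μ_{k,l}` of the signed measure `μ`, i.e.
`∫_0^∞ h dμ_{k,l} = ∫_{ℝ^d} h(|x|) Y_{k,l}(x) dμ` for all continuous compactly supported `h`. -/
def IsComponentFamily (μ : SignedMeasure (E d))
    (ν : (k : ℕ) → Fin (B.a k) → Measure ℝ) : Prop :=
  ∀ k l, (ν k l) (Set.Iio 0) = 0 ∧
    ∀ h : ℝ → ℝ, Continuous h → HasCompactSupport h →
      ∫ t, h t ∂(ν k l) = sInt μ (fun x => h ‖x‖ * B.Yf k l x)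

/-- The summability condition `C_N = ∑_{k,l} ∫_0^∞ r^N r^{-k} dσ_{k,l}(r) < ∞` for all `N`. -/
def SummCond (σ : (k : ℕ) → Fin (B.a k) → Measure ℝ) : Prop :=
  ∀ N : ℕ, (∑' k : ℕ, ∑ l, ∫⁻ r, (ENNReal.ofReal r) ^ N * ((ENNReal.ofReal r) ^ k)⁻¹
    ∂(σ k l)) < ⊤

end HarmonicBasis

/-- The set `W_τ^{Sti}` of all non-negative moment measures on `[0,∞)` having the same
moments as `τ`. -/
def WSti (τ : Measure ℝ) : Set (Measure ℝ) :=
  {ρ | ρ (Set.Iio 0) = 0 ∧ (∀ m : ℕ, Integrable (fun t => t ^ m) ρ) ∧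
    ∀ m : ℕ, ∫ t, t ^ m ∂ρ = ∫ t, t ^ m ∂τ}

/-- A measure `ν` on `[0,∞)` is determined in the sense of Stieltjes if it is the only
non-negative measure on `[0,∞)` with its moments. -/
def StieltjesDeterminate (ν : Measure ℝ) : Prop :=
  ∀ τ : Measure ℝ, τ ∈ WSti ν → τ = ν

/-!
Take `μ = ∑ Y_{k,l}(θ) dθ r^{-k} dσ_{k,l}(r)` in polar coordinates. Since `Y_{k,l}` has unit `L²`
norm, its `L¹` norm on the sphere is bounded independently of `k` and `l`, so the summability
hypothesis makes the total variation of the sum finite, and it is carried by the annulus because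
every `σ_{k,l}` is carried by `[ρ, R]`. Testing `μ` against `Y_{k,l}(x) g(|x|)`, where
`Y_{k,l}(rθ) = r^k Y_{k,l}(θ)`, orthonormality leaves only the term `(k, l)`, in which the
factors `r^k` and `r^{-k}` cancel, and the value is `∫ g dσ_{k,l}`. Nonnegative
`g` give pseudo-positivity, and `g(r) = p_{k,l}(r²)` gives the functional on polynomials.
-/

lemma sInt_toSignedMeasure_sub {α G : Type*} [MeasurableSpace α] [NormedAddCommGroup G]
    [NormedSpace ℝ G] (μ ν : Measure α) [IsFiniteMeasure μ] [IsFiniteMeasure ν]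
    {f : α → G} (hμ : Integrable f μ) (hν : Integrable f ν) :
    sInt (μ.toSignedMeasure - ν.toSignedMeasure) f = ∫ x, f x ∂μ - ∫ x, f x ∂ν := by
  have hμν : μ + (ν - μ) = ν + (μ - ν) := by
    have h := Measure.sub_toSignedMeasure_eq_toSignedMeasure_sub (μ := μ) (ν := ν)
    rw [sub_eq_sub_iff_add_eq_add, ← Measure.toSignedMeasure_add, ← Measure.toSignedMeasure_add,
      Measure.toSignedMeasure_eq_toSignedMeasure_iff] at h
    rw [h, add_comm]
  have hint := congrArg (fun κ => ∫ x, f x ∂κ) hμν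
  simp only [integral_add_measure hμ (hν.mono_measure Measure.sub_le),
    integral_add_measure hν (hμ.mono_measure Measure.sub_le)] at hint
  rw [sInt, Measure.toJordanDecomposition_toSignedMeasure_sub,
    Measure.jordanDecompositionOfToSignedMeasureSub_posPart,
    Measure.jordanDecompositionOfToSignedMeasureSub_negPart,
    sub_eq_sub_iff_add_eq_add, add_comm, ← hint, add_comm]

lemma totalVariation_toSignedMeasure_sub_le {α : Type*} [MeasurableSpace α] (μ ν : Measure α)
    [IsFiniteMeasure μ] [IsFiniteMeasure ν] :
    (μ.toSignedMeasure - ν.toSignedMeasure).totalVariation ≤ μ + ν := by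
  rw [SignedMeasure.totalVariation, Measure.toJordanDecomposition_toSignedMeasure_sub,
    Measure.jordanDecompositionOfToSignedMeasureSub_posPart,
    Measure.jordanDecompositionOfToSignedMeasureSub_negPart]
  exact add_le_add Measure.sub_le Measure.sub_le

lemma sInt_finsetSum {α G ι : Type*} [MeasurableSpace α] [NormedAddCommGroup G]
    [NormedSpace ℝ G] (μ : SignedMeasure α) (s : Finset ι) {f : ι → α → G}
    (hf : ∀ i ∈ s, Integrable (f i) μ.totalVariation) :
    sInt μ (fun x => ∑ i ∈ s, f i x) = ∑ i ∈ s, sInt μ (f i) := by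
  simp only [sInt, Finset.sum_sub_distrib]
  rw [integral_finsetSum _ fun i hi => (hf i hi).mono_measure (Measure.le_add_right le_rfl),
    integral_finsetSum _ fun i hi => (hf i hi).mono_measure (Measure.le_add_left le_rfl)]

lemma map_toSignedMeasure {α β : Type*} [MeasurableSpace α] [MeasurableSpace β] (μ : Measure α)
    [IsFiniteMeasure μ] {Φ : α → β} (hΦ : Measurable Φ) :
    μ.toSignedMeasure.map Φ = (μ.map Φ).toSignedMeasure := by
  ext s hs
  simp [VectorMeasure.map_apply _ hΦ hs, hs, hΦ hs, map_measureReal_apply hΦ hs]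

section MapWithDensity

variable {Ω α : Type*} [MeasurableSpace Ω] [MeasurableSpace α] {κ : Measure Ω} {w : Ω → ℝ}
  {Φ : Ω → α}

lemma map_withDensityᵥ_eq_sub (hΦ : Measurable Φ) (hw : Integrable w κ) :
    have := isFiniteMeasure_withDensity_ofReal hw.2
    have := isFiniteMeasure_withDensity_ofReal hw.neg.2
    (κ.withDensityᵥ w).map Φ =
      ((κ.withDensity fun z => ENNReal.ofReal (w z)).map Φ).toSignedMeasure -
        ((κ.withDensity fun z => ENNReal.ofReal ((-w) z)).map Φ).toSignedMeasure := by
  intro _ _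
  rw [withDensityᵥ_eq_withDensity_pos_part_sub_withDensity_neg_part hw,
    ← map_toSignedMeasure _ hΦ, ← map_toSignedMeasure _ hΦ]
  exact map_sub (VectorMeasure.mapₗ (R := ℝ) Φ) _ _

lemma totalVariation_map_withDensityᵥ_absolutelyContinuous (hΦ : Measurable Φ)
    (hw : Integrable w κ) : SignedMeasure.totalVariation ((κ.withDensityᵥ w).map Φ) ≪ κ.map Φ := by
  have := isFiniteMeasure_withDensity_ofReal hw.2
  have := isFiniteMeasure_withDensity_ofReal hw.neg.2
  rw [map_withDensityᵥ_eq_sub hΦ hw]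
  refine (totalVariation_toSignedMeasure_sub_le _ _).absolutelyContinuous.trans ?_
  exact .add_left ((withDensity_absolutelyContinuous _ _).map hΦ)
    ((withDensity_absolutelyContinuous _ _).map hΦ)

variable {G : Type*} [NormedAddCommGroup G] [NormedSpace ℝ G] {f : α → G}

lemma integrable_max_zero_smul {F : Ω → G} (hw : AEMeasurable w κ)
    (hF : AEStronglyMeasurable F κ) (hwF : Integrable (fun z => w z • F z) κ) :
    Integrable (fun z => max (w z) 0 • F z) κ := by
  refine hwF.mono ((hw.max aemeasurable_const).aestronglyMeasurable.smul hF)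
    (.of_forall fun z => ?_)
  rw [norm_smul, norm_smul, Real.norm_of_nonneg (le_max_right _ _)]
  gcongr
  exact max_le (le_abs_self _) (abs_nonneg _)

lemma integrable_map_withDensity_ofReal_iff (hΦ : Measurable Φ) (hw : AEMeasurable w κ)
    (hf : StronglyMeasurable f) :
    Integrable f ((κ.withDensity fun z => ENNReal.ofReal (w z)).map Φ) ↔
      Integrable (fun z => max (w z) 0 • f (Φ z)) κ := by
  rw [integrable_map_measure hf.aestronglyMeasurable hΦ.aemeasurable,
    integrable_withDensity_iff_integrable_smul₀' hw.ennreal_ofReal (by simp)]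
  simp only [ENNReal.toReal_ofReal', Function.comp_apply]

lemma integral_map_withDensity_ofReal (hΦ : Measurable Φ) (hw : AEMeasurable w κ)
    (hf : StronglyMeasurable f) :
    ∫ x, f x ∂(κ.withDensity fun z => ENNReal.ofReal (w z)).map Φ =
      ∫ z, max (w z) 0 • f (Φ z) ∂κ := by
  rw [integral_map hΦ.aemeasurable hf.aestronglyMeasurable,
    integral_withDensity_eq_integral_toReal_smul₀ hw.ennreal_ofReal (by simp)]
  simp only [ENNReal.toReal_ofReal']

lemma sInt_map_withDensityᵥ (hΦ : Measurable Φ) (hw : Integrable w κ)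
    (hf : StronglyMeasurable f) (hwf : Integrable (fun z => w z • f (Φ z)) κ) :
    sInt ((κ.withDensityᵥ w).map Φ) f = ∫ z, w z • f (Φ z) ∂κ := by
  have hfΦ : AEStronglyMeasurable (fun z => f (Φ z)) κ :=
    (hf.comp_measurable hΦ).aestronglyMeasurable
  have hpos : Integrable (fun z => max (w z) 0 • f (Φ z)) κ :=
    integrable_max_zero_smul hw.aemeasurable hfΦ hwf
  have hneg : Integrable (fun z => max ((-w) z) 0 • f (Φ z)) κ :=
    integrable_max_zero_smul hw.neg.aemeasurable hfΦ (by simpa using hwf.neg)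
  have := isFiniteMeasure_withDensity_ofReal hw.2
  have := isFiniteMeasure_withDensity_ofReal hw.neg.2
  rw [map_withDensityᵥ_eq_sub hΦ hw, sInt_toSignedMeasure_sub,
    integral_map_withDensity_ofReal hΦ hw.aemeasurable hf,
    integral_map_withDensity_ofReal hΦ hw.neg.aemeasurable hf, ← integral_sub hpos hneg]
  · simp only [← sub_smul, Pi.neg_apply, max_zero_sub_max_neg_zero_eq_self]
  · exact (integrable_map_withDensity_ofReal_iff hΦ hw.aemeasurable hf).2 hpos
  · exact (integrable_map_withDensity_ofReal_iff hΦ hw.neg.aemeasurable hf).2 hneg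

end MapWithDensity

/-- The disjoint union of a family of measures, on the disjoint union of the spaces. -/
def sigmaMeasure {ι : Type*} {Z : ι → Type*} [∀ i, MeasurableSpace (Z i)]
    (κ : ∀ i, Measure (Z i)) : Measure (Σ i, Z i) :=
  Measure.sum fun i => (κ i).map (Sigma.mk i)

section SigmaMeasure

variable {ι : Type*} {Z : ι → Type*} [∀ i, MeasurableSpace (Z i)]

lemma measurable_sigmaMk (i : ι) : Measurable (Sigma.mk i : Z i → Σ i, Z i) :=
  fun _ hs => MeasurableSpace.measurableSet_iInf.1 hs i

lemma measurable_sigma_iff {β : Type*} [MeasurableSpace β] {f : (Σ i, Z i) → β} :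
    Measurable f ↔ ∀ i, Measurable fun z => f ⟨i, z⟩ :=
  ⟨fun hf i => hf.comp (measurable_sigmaMk i),
    fun hf _ hs => MeasurableSpace.measurableSet_iInf.2 fun i => hf i hs⟩

lemma lintegral_sigmaMeasure (κ : ∀ i, Measure (Z i)) {f : (Σ i, Z i) → ℝ≥0∞}
    (hf : Measurable f) : ∫⁻ z, f z ∂sigmaMeasure κ = ∑' i, ∫⁻ z, f ⟨i, z⟩ ∂κ i := by
  simp only [sigmaMeasure, lintegral_sum_measure, lintegral_map hf (measurable_sigmaMk _)]

lemma ae_sigmaMeasure {κ : ∀ i, Measure (Z i)} {p : (Σ i, Z i) → Prop}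
    (hp : MeasurableSet {z | p z}) (h : ∀ i, ∀ᵐ z ∂κ i, p ⟨i, z⟩) :
    ∀ᵐ z ∂sigmaMeasure κ, p z :=
  (Measure.ae_sum_iff' hp).2 fun i => (ae_map_iff (measurable_sigmaMk i).aemeasurable hp).2 (h i)

lemma hasSum_integral_sigmaMeasure {κ : ∀ i, Measure (Z i)} {G : Type*} [NormedAddCommGroup G]
    [NormedSpace ℝ G] {f : (Σ i, Z i) → G} (hf : Integrable f (sigmaMeasure κ)) :
    HasSum (fun i => ∫ z, f ⟨i, z⟩ ∂κ i) (∫ z, f z ∂sigmaMeasure κ) := by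
  unfold sigmaMeasure at hf ⊢
  convert hasSum_integral_measure hf using 2 with i
  have hfi : Integrable f ((κ i).map (Sigma.mk i)) := hf.mono_measure (Measure.le_sum _ i)
  rw [integral_map (measurable_sigmaMk i).aemeasurable hfi.aestronglyMeasurable]

end SigmaMeasure

/-- The measure `r⁻ⁿ dσ(r)`, which is meant for `σ` supported in `[0, ∞)`. The inverse is taken
in `ℝ≥0∞`, so for `0 < n` a mass of `σ` at `0` becomes infinite. -/
def invPowMeasure (n : ℕ) (σ : Measure ℝ) : Measure ℝ :=
  σ.withDensity fun r => (ENNReal.ofReal r ^ n)⁻¹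

lemma invPowMeasure_univ (n : ℕ) (σ : Measure ℝ) :
    invPowMeasure n σ Set.univ = ∫⁻ r, (ENNReal.ofReal r ^ n)⁻¹ ∂σ := by
  rw [invPowMeasure, withDensity_apply _ MeasurableSet.univ, Measure.restrict_univ]

lemma integral_pow_smul_invPowMeasure {G : Type*} [NormedAddCommGroup G] [NormedSpace ℝ G]
    (n : ℕ) {σ : Measure ℝ} [IsFiniteMeasure (invPowMeasure n σ)] (hσ : ∀ᵐ r ∂σ, 0 ≤ r)
    (g : ℝ → G) : ∫ r, r ^ n • g r ∂invPowMeasure n σ = ∫ r, g r ∂σ := by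
  have hmeas : Measurable fun r => (ENNReal.ofReal r ^ n)⁻¹ := by fun_prop
  have hfin : ∀ᵐ r ∂σ, (ENNReal.ofReal r ^ n)⁻¹ < ⊤ :=
    ae_lt_top hmeas (invPowMeasure_univ n σ ▸ measure_ne_top _ _)
  rw [invPowMeasure, integral_withDensity_eq_integral_toReal_smul hmeas hfin]
  refine integral_congr_ae ?_
  filter_upwards [hσ, hfin] with r hr hr_fin
  have hne : r ^ n ≠ 0 := by
    rw [← ENNReal.ofReal_pow hr, ENNReal.inv_lt_top, ENNReal.ofReal_pos] at hr_fin
    exact hr_fin.ne'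
  rw [ENNReal.toReal_inv, ENNReal.toReal_pow, ENNReal.toReal_ofReal hr, inv_smul_smul₀ hne]

lemma lintegral_enorm_le_of_integral_mul_self {α : Type*} [MeasurableSpace α] {m : Measure α}
    {f : α → ℝ} (hf : ∫ x, f x * f x ∂m = 1) : ∫⁻ x, ‖f x‖ₑ ∂m ≤ m Set.univ + 1 := by
  have hint : Integrable (fun x => f x * f x) m :=
    .of_integral_ne_zero (hf ▸ one_ne_zero)
  calc ∫⁻ x, ‖f x‖ₑ ∂m ≤ ∫⁻ x, 1 + ENNReal.ofReal (f x * f x) ∂m := by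
        refine lintegral_mono fun x => ?_
        rw [← ofReal_norm, ← ENNReal.ofReal_one, ← ENNReal.ofReal_add one_pos.le
          (mul_self_nonneg _), Real.norm_eq_abs]
        refine ENNReal.ofReal_le_ofReal ?_
        nlinarith [sq_nonneg (|f x| - 1), abs_mul_abs_self (f x), abs_nonneg (f x)]
    _ = m Set.univ + 1 := by
        rw [lintegral_add_left measurable_const, lintegral_one,
          ← ofReal_integral_eq_lintegral_ofReal hint (.of_forall fun x => mul_self_nonneg _), hf,
          ENNReal.ofReal_one]

section ProductFamily

variable {ι S T : Type*} [MeasurableSpace S] [MeasurableSpace T] {m : Measure S}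
  {τ : ι → Measure T} {y : ι → S → ℝ}

lemma measurable_sigma_fst (hy : ∀ i, Measurable (y i)) :
    Measurable fun z : Σ _ : ι, S × T => y z.1 z.2.1 :=
  measurable_sigma_iff.2 fun i => (hy i).comp measurable_fst

lemma ae_sigmaMeasure_prod_snd [∀ i, SFinite (τ i)] {p : T → Prop}
    (hp : MeasurableSet {t | p t}) (hτ : ∀ i, ∀ᵐ t ∂τ i, p t) :
    ∀ᵐ z ∂sigmaMeasure fun i => m.prod (τ i), p z.2.2 :=
  ae_sigmaMeasure (measurable_sigma_iff.2 (fun _ => measurable_snd) hp)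
    fun i => Measure.quasiMeasurePreserving_snd.ae (hτ i)

lemma integrable_sigmaMeasure_prod_fst [IsFiniteMeasure m] [∀ i, SFinite (τ i)]
    (hy : ∀ i, Measurable (y i)) (hnorm : ∀ i, ∫ s, y i s * y i s ∂m = 1)
    (hτ : ∑' i, τ i Set.univ < ⊤) :
    Integrable (fun z => y z.1 z.2.1) (sigmaMeasure fun i => m.prod (τ i)) := by
  refine ⟨(measurable_sigma_fst hy).aestronglyMeasurable, ?_⟩
  calc ∫⁻ z, ‖y z.1 z.2.1‖ₑ ∂sigmaMeasure (fun i => m.prod (τ i))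
      = ∑' i, ∫⁻ z : S × T, ‖y i z.1‖ₑ ∂m.prod (τ i) :=
        lintegral_sigmaMeasure _ (measurable_sigma_fst hy).enorm
    _ = ∑' i, (∫⁻ s, ‖y i s‖ₑ ∂m) * τ i Set.univ := by
        congr! 2 with i
        simpa using lintegral_prod_mul (ν := τ i) (hy i).enorm.aemeasurable
          (aemeasurable_const (b := 1))
    _ ≤ ∑' i, (m Set.univ + 1) * τ i Set.univ := by
        gcongr with i
        exact lintegral_enorm_le_of_integral_mul_self (hnorm i)
    _ < ⊤ := by
        rw [ENNReal.tsum_mul_left]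
        exact ENNReal.mul_lt_top (by finiteness) hτ

end ProductFamily

section Polar

variable {ι V : Type*} [NormedAddCommGroup V] [NormedSpace ℝ V]

/-- The point `r θ` with polar coordinates `z = (i, θ, r)`. The parameter space has one copy of the
polar coordinates for each `i : ι`. -/
def polarPoint (z : Σ _ : ι, sphere (0 : V) 1 × ℝ) : V := z.2.2 • (z.2.1 : V)

lemma norm_polarPoint (z : Σ _ : ι, sphere (0 : V) 1 × ℝ) : ‖polarPoint z‖ = |z.2.2| := by
  rw [polarPoint, norm_smul, norm_eq_of_mem_sphere, mul_one, Real.norm_eq_abs]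

variable [MeasurableSpace V]

/-- The signed measure `∑ i, yᵢ(θ) dm(θ) dτᵢ(r)` in polar coordinates `x = r θ`. Realising it as the
image of a single density on the parameter space avoids an infinite sum of signed measures. -/
def polarSignedMeasure (m : Measure (sphere (0 : V) 1)) (y : ι → sphere (0 : V) 1 → ℝ)
    (τ : ι → Measure ℝ) : SignedMeasure V :=
  ((sigmaMeasure fun i => m.prod (τ i)).withDensityᵥ fun z => y z.1 z.2.1).map polarPoint

variable {G : Type*} [NormedAddCommGroup G] [NormedSpace ℝ G]
  {m : Measure (sphere (0 : V) 1)} {y : ι → sphere (0 : V) 1 → ℝ} {τ : ι → Measure ℝ} {ρ R : ℝ}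

lemma integral_prod_smul_homogeneous [SFinite m] {ν : Measure ℝ} [SFinite ν]
    (hν : ∀ᵐ r ∂ν, 0 ≤ r) {n : ℕ} {F : V → ℝ} (hF : ∀ (r : ℝ) x, F (r • x) = r ^ n * F x)
    (u : sphere (0 : V) 1 → ℝ) (g : ℝ → G) :
    ∫ z, u z.1 • F (z.2 • (z.1 : V)) • g ‖z.2 • (z.1 : V)‖ ∂m.prod ν =
      (∫ θ, u θ * F θ ∂m) • ∫ r, r ^ n • g r ∂ν := by
  rw [← integral_prod_smul]
  refine integral_congr_ae ?_
  filter_upwards [Measure.quasiMeasurePreserving_snd.ae hν] with z hz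
  rw [hF, norm_smul, norm_eq_of_mem_sphere, mul_one, Real.norm_of_nonneg hz, smul_smul, smul_smul]
  ring_nf

variable [BorelSpace V]

lemma measurable_polarPoint [SecondCountableTopology V] :
    Measurable (polarPoint : (Σ _ : ι, sphere (0 : V) 1 × ℝ) → V) :=
  measurable_sigma_iff.2 fun _ => by unfold polarPoint; fun_prop

lemma totalVariation_polarSignedMeasure_compl_annulus [SecondCountableTopology V]
    [∀ i, SFinite (τ i)] (hρ : 0 ≤ ρ)
    (hy : Integrable (fun z => y z.1 z.2.1) (sigmaMeasure fun i => m.prod (τ i)))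
    (hτ : ∀ i, ∀ᵐ r ∂τ i, r ∈ Set.Icc ρ R) :
    (polarSignedMeasure m y τ).totalVariation {x | ρ ≤ ‖x‖ ∧ ‖x‖ ≤ R}ᶜ = 0 := by
  refine totalVariation_map_withDensityᵥ_absolutelyContinuous measurable_polarPoint hy ?_
  have hannulus : MeasurableSet {x : V | ρ ≤ ‖x‖ ∧ ‖x‖ ≤ R} := by measurability
  rw [← mem_ae_iff, mem_ae_map_iff measurable_polarPoint.aemeasurable hannulus]
  filter_upwards [ae_sigmaMeasure_prod_snd measurableSet_Icc hτ] with z hz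
  rwa [Set.mem_preimage, Set.mem_ofPred_eq, norm_polarPoint, abs_of_nonneg (hρ.trans hz.1)]

lemma integrable_smul_polarPoint [ProperSpace V] [∀ i, SFinite (τ i)] (hρ : 0 ≤ ρ)
    (hy : Integrable (fun z => y z.1 z.2.1) (sigmaMeasure fun i => m.prod (τ i)))
    (hτ : ∀ i, ∀ᵐ r ∂τ i, r ∈ Set.Icc ρ R) {f : V → G} (hf : Continuous f) :
    Integrable (fun z => y z.1 z.2.1 • f (polarPoint z))
      (sigmaMeasure fun i => m.prod (τ i)) := by
  obtain ⟨C, hC⟩ :=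
    (isCompact_closedBall (0 : V) R).exists_bound_of_continuousOn hf.continuousOn
  refine hy.smul_bdd C
    (hf.stronglyMeasurable.comp_measurable measurable_polarPoint).aestronglyMeasurable ?_
  filter_upwards [ae_sigmaMeasure_prod_snd measurableSet_Icc hτ] with z hz
  refine hC _ (mem_closedBall_zero_iff.2 ?_)
  rw [norm_polarPoint, abs_of_nonneg (hρ.trans hz.1)]
  exact hz.2

lemma sInt_polarSignedMeasure_smul [ProperSpace V] [SFinite m] [DecidableEq ι]
    [∀ i, SFinite (τ i)] (hρ : 0 ≤ ρ) {n : ι → ℕ}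
    {Y : ι → V → ℝ} (hYcont : ∀ i, Continuous (Y i))
    (hYhom : ∀ i (r : ℝ) x, Y i (r • x) = r ^ n i * Y i x)
    (hYorth : ∀ i j, ∫ θ, Y i θ * Y j θ ∂m = if i = j then 1 else 0)
    (hY : Integrable (fun z => Y z.1 z.2.1) (sigmaMeasure fun i => m.prod (τ i)))
    (hτ : ∀ i, ∀ᵐ r ∂τ i, r ∈ Set.Icc ρ R) (i : ι) {g : ℝ → G} (hg : Continuous g) :
    sInt (polarSignedMeasure m (fun i θ => Y i θ) τ) (fun x => Y i x • g ‖x‖) =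
      ∫ r, r ^ n i • g r ∂τ i := by
  have hf : Continuous fun x => Y i x • g ‖x‖ := (hYcont i).smul (hg.comp continuous_norm)
  have hint := integrable_smul_polarPoint (y := fun i θ => Y i θ) hρ hY hτ hf
  rw [polarSignedMeasure,
    sInt_map_withDensityᵥ measurable_polarPoint hY hf.stronglyMeasurable hint]
  refine (hasSum_integral_sigmaMeasure hint).unique ?_
  have hterm (j : ι) : ∫ z : sphere (0 : V) 1 × ℝ,
      Y j z.1 • Y i (z.2 • (z.1 : V)) • g ‖z.2 • (z.1 : V)‖ ∂m.prod (τ j) =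
        if j = i then ∫ r, r ^ n i • g r ∂τ i else 0 := by
    rw [integral_prod_smul_homogeneous ((hτ j).mono fun r hr => hρ.trans hr.1) (hYhom i)
      (fun θ => Y j θ), hYorth, ite_smul, one_smul, zero_smul]
    split_ifs with h <;> simp only [h]
  exact (hasSum_ite_eq i _).congr_fun hterm

end Polar

theorem statement5_general {ι V : Type*} [NormedAddCommGroup V] [NormedSpace ℝ V] [ProperSpace V]
    [MeasurableSpace V] [BorelSpace V] [DecidableEq ι] (m : Measure (sphere (0 : V) 1))
    [IsFiniteMeasure m] (n : ι → ℕ) (Y : ι → V → ℝ) (hYcont : ∀ i, Continuous (Y i))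
    (hYhom : ∀ i (r : ℝ) x, Y i (r • x) = r ^ n i * Y i x)
    (hYorth : ∀ i j, ∫ θ, Y i θ * Y j θ ∂m = if i = j then 1 else 0)
    (ρ R : ℝ) (hρ : 0 ≤ ρ) (σ : ι → Measure ℝ) (hsupp : ∀ i, σ i (Set.Icc ρ R)ᶜ = 0)
    (hsum : ∑' i, ∫⁻ r, (ENNReal.ofReal r ^ n i)⁻¹ ∂σ i < ⊤) :
    ∃ μ : SignedMeasure V, μ.totalVariation {x | ρ ≤ ‖x‖ ∧ ‖x‖ ≤ R}ᶜ = 0 ∧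
      ∀ (i : ι) {G : Type*} [NormedAddCommGroup G] [NormedSpace ℝ G] (g : ℝ → G), Continuous g →
        sInt μ (fun x => Y i x • g ‖x‖) = ∫ r, g r ∂σ i := by
  let τ (i : ι) : Measure ℝ := invPowMeasure (n i) (σ i)
  have hτsum : ∑' i, τ i Set.univ < ⊤ := by simpa only [τ, invPowMeasure_univ] using hsum
  have (i : ι) : IsFiniteMeasure (τ i) := ⟨(ENNReal.le_tsum i).trans_lt hτsum⟩
  have hσ (i : ι) : ∀ᵐ r ∂σ i, r ∈ Set.Icc ρ R := hsupp i
  have hτ (i : ι) : ∀ᵐ r ∂τ i, r ∈ Set.Icc ρ R :=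
    (withDensity_absolutelyContinuous _ _).ae_le (hσ i)
  have hY : Integrable (fun z => Y z.1 z.2.1) (sigmaMeasure fun i => m.prod (τ i)) :=
    integrable_sigmaMeasure_prod_fst (y := fun i (θ : sphere (0 : V) 1) => Y i θ)
      (fun i => (hYcont i).measurable.comp measurable_subtype_coe) (fun i => by simp [hYorth])
      hτsum
  refine ⟨polarSignedMeasure m (fun i θ => Y i θ) τ,
    totalVariation_polarSignedMeasure_compl_annulus hρ hY hτ, fun i G _ _ g hg => ?_⟩
  rw [sInt_polarSignedMeasure_smul hρ hYcont hYhom hYorth hY hτ i hg,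
    integral_pow_smul_invPowMeasure (n i) ((hσ i).mono fun r hr => hρ.trans hr.1)]

lemma eval_smul_of_isHomogeneous {R ι : Type*} [CommSemiring R] {n : ℕ} {P : MvPolynomial ι R}
    (hP : P.IsHomogeneous n) (r : R) (x : ι → R) : eval (r • x) P = r ^ n * eval x P := by
  rw [eval_eq, eval_eq, Finset.mul_sum]
  refine Finset.sum_congr rfl fun s hs => ?_
  have hdeg : ∑ i ∈ s.support, s i = n := (hP.degree_eq_sum_deg_support hs).symm
  simp only [Pi.smul_apply, smul_eq_mul, mul_pow, Finset.prod_mul_distrib,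
    Finset.prod_pow_eq_pow_sum, hdeg]
  ring

lemma continuous_evalC {d : ℕ} (P : MvPolynomial (Fin d) ℂ) : Continuous (evalC P) :=
  (MvPolynomial.continuous_eval P).comp (by fun_prop)

lemma evalC_normSqP {d : ℕ} (x : E d) : evalC (normSqP d) x = (‖x‖ : ℂ) ^ 2 := by
  rw [← Complex.ofReal_pow, EuclideanSpace.norm_sq_eq]
  simp [evalC, normSqP]

instance isFiniteMeasure_sphMeas (d : ℕ) : IsFiniteMeasure (sphMeas d) := by
  unfold sphMeas; infer_instance

lemma integrable_of_ae_norm_le {V G : Type*} [NormedAddCommGroup V] [ProperSpace V]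
    [MeasurableSpace V] [OpensMeasurableSpace V] [NormedAddCommGroup G] {μ : Measure V}
    [IsFiniteMeasure μ] {R : ℝ} (hμ : ∀ᵐ x ∂μ, ‖x‖ ≤ R) {f : V → G} (hf : Continuous f) :
    Integrable f μ := by
  obtain ⟨C, hC⟩ :=
    (isCompact_closedBall (0 : V) R).exists_bound_of_continuousOn hf.continuousOn
  refine .of_bound hf.aestronglyMeasurable C ?_
  filter_upwards [hμ] with x hx using hC x (mem_closedBall_zero_iff.2 hx)

lemma isMomentMeasure_of_ae_norm_le {d : ℕ} {μ : SignedMeasure (E d)} {R : ℝ}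
    (hμ : ∀ᵐ x ∂μ.totalVariation, ‖x‖ ≤ R) : IsMomentMeasure μ :=
  fun P => integrable_of_ae_norm_le hμ (continuous_evalC P)

namespace HarmonicBasis

variable {d : ℕ} (B : HarmonicBasis d)

lemma continuous_Yf (k : ℕ) (l : Fin (B.a k)) : Continuous (B.Yf k l) :=
  (MvPolynomial.continuous_eval (B.Y k l)).comp (by fun_prop)

lemma Yf_smul (k : ℕ) (l : Fin (B.a k)) (r : ℝ) (x : E d) :
    B.Yf k l (r • x) = r ^ k * B.Yf k l x :=
  eval_smul_of_isHomogeneous (B.homogeneous k l) r _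

lemma integral_Yf_mul_Yf (i j : Σ k, Fin (B.a k)) :
    ∫ θ : sphere (0 : E d) 1, B.Yf i.1 i.2 θ * B.Yf j.1 j.2 θ ∂sphMeas d =
      if i = j then 1 else 0 := by
  obtain ⟨k, l⟩ := i
  obtain ⟨k', l'⟩ := j
  have hiff : (k = k' ∧ (l : ℕ) = l') ↔ (⟨k, l⟩ : Σ k, Fin (B.a k)) = ⟨k', l'⟩ := by
    rw [Sigma.mk.injEq]
    exact and_congr_right fun h => (Fin.heq_ext_iff (congrArg B.a h)).symm
  simpa only [hiff, Yf] using B.orthonormal k k' l l'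

lemma evalC_aeval_normSqP_mul_YC (k : ℕ) (l : Fin (B.a k)) (p : Polynomial ℂ) (x : E d) :
    evalC (Polynomial.aeval (normSqP d) p * B.YC k l) x =
      B.Yf k l x • p.eval ((‖x‖ : ℂ) ^ 2) := by
  have hYC : evalC (B.YC k l) x = B.Yf k l x := by
    rw [evalC, YC, eval_map]
    exact (eval₂_comp (algebraMap ℝ ℂ) x (B.Y k l)).symm
  have hp : evalC (Polynomial.aeval (normSqP d) p) x = p.eval ((‖x‖ : ℂ) ^ 2) := by
    rw [← evalC_normSqP, ← Polynomial.coe_aeval_eq_eval]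
    exact (Polynomial.aeval_algHom_apply (MvPolynomial.aeval fun i => (x i : ℂ)) _ p).symm
  rw [evalC, map_mul, ← evalC, ← evalC, hYC, hp, Complex.real_smul, mul_comm]

lemma GaussDecomp.evalC_eq {B : HarmonicBasis d} {f : MvPolynomial (Fin d) ℂ} {K : ℕ}
    {p : (k : ℕ) → Fin (B.a k) → Polynomial ℂ} (hf : B.GaussDecomp f K p) :
    evalC f = fun x => ∑ k ∈ Finset.range (K + 1), ∑ l,
      B.Yf k l x • (p k l).eval ((‖x‖ : ℂ) ^ 2) := by
  funext x
  simp only [← evalC_aeval_normSqP_mul_YC]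
  rw [hf.2]
  simp only [evalC, map_sum]

lemma GaussDecomp.sInt_evalC {B : HarmonicBasis d} {f : MvPolynomial (Fin d) ℂ} {K : ℕ}
    {p : (k : ℕ) → Fin (B.a k) → Polynomial ℂ} (hf : B.GaussDecomp f K p)
    {μ : SignedMeasure (E d)} (hμ : IsMomentMeasure μ) :
    sInt μ (evalC f) = ∑ k ∈ Finset.range (K + 1), ∑ l,
      sInt μ fun x => B.Yf k l x • (p k l).eval ((‖x‖ : ℂ) ^ 2) := by
  have hterm (k : ℕ) (l : Fin (B.a k)) :
      Integrable (fun x => B.Yf k l x • (p k l).eval ((‖x‖ : ℂ) ^ 2)) μ.totalVariation := by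
    simpa only [← evalC_aeval_normSqP_mul_YC] using hμ _
  rw [hf.evalC_eq, sInt_finsetSum _ _ fun k _ => integrable_finsetSum _ fun l _ => hterm k l]
  exact Finset.sum_congr rfl fun k _ => sInt_finsetSum _ _ fun l _ => hterm k l

lemma GaussDecomp.sum_integral_eval_eq_sInt {B : HarmonicBasis d} {f : MvPolynomial (Fin d) ℂ}
    {K : ℕ} {p : (k : ℕ) → Fin (B.a k) → Polynomial ℂ} (hf : B.GaussDecomp f K p)
    {μ : SignedMeasure (E d)} (hmoment : IsMomentMeasure μ)
    {σ : (k : ℕ) → Fin (B.a k) → Measure ℝ}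
    (hμ : ∀ k l (g : ℝ → ℂ), Continuous g →
      sInt μ (fun x => B.Yf k l x • g ‖x‖) = ∫ r, g r ∂σ k l) :
    ∑ k ∈ Finset.range (K + 1), ∑ l, ∫ r, (p k l).eval ((r : ℂ) ^ 2) ∂σ k l =
      sInt μ (evalC f) := by
  rw [hf.sInt_evalC hmoment]
  refine Finset.sum_congr rfl fun k _ => Finset.sum_congr rfl fun l _ => ?_
  exact (hμ k l (fun r => (p k l).eval ((r : ℂ) ^ 2)) (by fun_prop)).symm

lemma pseudoPositive_of_sInt_eq_integral {μ : SignedMeasure (E d)}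
    {σ : (k : ℕ) → Fin (B.a k) → Measure ℝ}
    (hμ : ∀ k l (g : ℝ → ℝ), Continuous g →
      sInt μ (fun x => B.Yf k l x • g ‖x‖) = ∫ r, g r ∂σ k l) : B.PseudoPositive μ := by
  intro k l h hcont _ hpos
  simp only [mul_comm (h _), ← smul_eq_mul, hμ k l h hcont]
  exact integral_nonneg hpos

end HarmonicBasis

theorem statement5 {d : ℕ} (hd : 1 ≤ d) (B : HarmonicBasis d)
    (ρ R : ℝ) (hρ : 0 ≤ ρ) (hρR : ρ ≤ R)
    (σ : (k : ℕ) → Fin (B.a k) → Measure ℝ)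
    (hsupp : ∀ k l, (σ k l) ((Set.Icc ρ R)ᶜ) = 0)
    (hsum : (∑' k : ℕ, ∑ l, ∫⁻ r, ((ENNReal.ofReal r) ^ k)⁻¹ ∂(σ k l)) < ⊤) :
    ∃ μ : SignedMeasure (E d), B.PseudoPositive μ ∧ IsMomentMeasure μ ∧
      μ.totalVariation {x : E d | ρ ≤ ‖x‖ ∧ ‖x‖ ≤ R}ᶜ = 0 ∧
      ∀ (f : MvPolynomial (Fin d) ℂ) (K : ℕ) (p : (k : ℕ) → Fin (B.a k) → Polynomial ℂ),
        B.GaussDecomp f K p →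
        (∑ k ∈ Finset.range (K + 1), ∑ l, ∫ r, (p k l).eval ((r : ℂ) ^ 2) ∂(σ k l))
          = sInt μ (evalC f) := by
  have hsum' : ∑' i : Σ k, Fin (B.a k), ∫⁻ r, (ENNReal.ofReal r ^ i.1)⁻¹ ∂σ i.1 i.2 < ⊤ := by
    simpa only [ENNReal.tsum_sigma', tsum_fintype] using hsum
  obtain ⟨μ, hμsupp, hμ⟩ := statement5_general (sphMeas d) (fun i : Σ k, Fin (B.a k) => i.1)
    (fun i => B.Yf i.1 i.2) (fun i => B.continuous_Yf i.1 i.2) (fun i => B.Yf_smul i.1 i.2)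
    B.integral_Yf_mul_Yf ρ R hρ (fun i => σ i.1 i.2) (fun i => hsupp i.1 i.2) hsum'
  have hmoment : IsMomentMeasure μ :=
    isMomentMeasure_of_ae_norm_le (Filter.mem_of_superset (mem_ae_iff.2 hμsupp) fun _ hx => hx.2)
  exact ⟨μ, B.pseudoPositive_of_sInt_eq_integral fun k l => hμ ⟨k, l⟩, hmoment, hμsupp,
    fun f K p hf => hf.sum_integral_eval_eq_sInt hmoment fun k l => hμ ⟨k, l⟩⟩
end
end

section
/- Let μ and σ be pseudo-positive moment measures on ℝ^d and let μ_{k,l}, σ_{k,l} be their component measures on [0,∞), i.e. the unique non-negative measures satisfying ∫_0^∞ h dμ_{k,l} = ∫_{ℝ^d} h(|x|) Y_{k,l}(x) dμ and ∫_0^∞ h dσ_{k,l} = ∫_{ℝ^d} h(|x|) Y_{k,l}(x) dσ for all continuous compactly supported h on [0,∞). If μ_{k,l} = σ_{k,l} for all k ∈ ℕ₀ and l = 1,…,a_k, then μ = σ. -/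
open MeasureTheory MvPolynomial Metric
open scoped ComplexOrder ENNReal

noncomputable section

/-! Multiplication by `|x|²` is adjoint to the Laplacian for the Fischer form, so a homogeneous
polynomial minus its orthogonal projection onto the multiples of `|x|²` is harmonic; by induction
on the degree the harmonic polynomials generate all polynomials under multiplication by `|x|²`.
In `∫ g(|x|) P(x) dμ` a factor `|x|²` of `P` can be absorbed into the test function `g`, hence the
component measures determine these integrals for every polynomial `P`. By Stone–Weierstrass the
functions `g(|x|) P(x)` are uniformly dense in `C_c(ℝ^d)`, and a signed measure is determined by its
values on `C_c(ℝ^d)`. -/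

section Fischer

open scoped Nat

variable {ι R K : Type*}

section CommSemiring

variable [Fintype ι] [CommSemiring R]

/-- The Laplace operator `∑ᵢ ∂ᵢ²` on polynomials. -/
def laplacian : MvPolynomial ι R →ₗ[R] MvPolynomial ι R :=
  ∑ i, (pderiv i).toLinearMap ∘ₗ (pderiv i).toLinearMap

lemma laplacian_apply (P : MvPolynomial ι R) : laplacian P = ∑ i, pderiv i (pderiv i P) := by
  simp [laplacian]

lemma isHomogeneous_laplacian {n : ℕ} {P : MvPolynomial ι R} (hP : P.IsHomogeneous n) :
    (laplacian P).IsHomogeneous (n - 2) := by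
  rw [laplacian_apply]
  exact IsHomogeneous.sum _ _ _ fun i _ => hP.pderiv.pderiv

lemma isHomogeneous_psum (n : ℕ) : (psum ι R n).IsHomogeneous n :=
  IsHomogeneous.sum _ _ _ fun i _ => isHomogeneous_X_pow i n

lemma laplacian_eq_zero_of_isHomogeneous {n : ℕ} (hn : n < 2) {P : MvPolynomial ι R}
    (hP : P.IsHomogeneous n) : laplacian P = 0 := by
  rw [laplacian_apply]
  refine Finset.sum_eq_zero fun i _ => ?_
  have hdP : (pderiv i P).IsHomogeneous 0 := by
    simpa only [Nat.sub_eq_zero_of_le (Nat.le_of_lt_succ hn)] using hP.pderiv (i := i)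
  rw [totalDegree_eq_zero_iff_eq_C.1 ((totalDegree_zero_iff_isHomogeneous _).2 hdP), pderiv_C]

/-- The Fischer form `⟨P, Q⟩ = P(∂) Q |_{x = 0}`, given in coefficients by
`∑ₘ m! · coeff m P · coeff m Q`. It makes multiplication by `Xᵢ` adjoint to `∂ᵢ`. -/
def fischerForm : LinearMap.BilinForm R (MvPolynomial ι R) :=
  (basisMonomials ι R).constr R fun m => ((∏ i, (m i)! : ℕ) : R) • lcoeff R m

lemma fischerForm_monomial_left (m : ι →₀ ℕ) (c : R) (Q : MvPolynomial ι R) :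
    fischerForm (monomial m c) Q = c * ((∏ i, (m i)! : ℕ) * coeff m Q) := by
  have hm : monomial m c = c • basisMonomials ι R m := by
    simp only [coe_basisMonomials, smul_monomial, smul_eq_mul, mul_one]
  rw [hm, map_smul, fischerForm, Module.Basis.constr_basis]
  rfl

lemma fischerForm_eq_sum (P Q : MvPolynomial ι R) :
    fischerForm P Q = ∑ m ∈ P.support, coeff m P * ((∏ i, (m i)! : ℕ) * coeff m Q) := by
  conv_lhs => rw [P.as_sum]
  simp only [map_sum, LinearMap.sum_apply, fischerForm_monomial_left]

lemma fischerForm_isSymm : (fischerForm (ι := ι) (R := R)).IsSymm := by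
  classical
  refine ⟨fun P Q => ?_⟩
  induction P using MvPolynomial.induction_on' with
  | add p q hp hq => simp_all
  | monomial m a =>
    induction Q using MvPolynomial.induction_on' with
    | add p q hp hq => simp_all
    | monomial n b =>
      simp only [fischerForm_monomial_left, coeff_monomial]
      by_cases hmn : m = n
      · subst hmn
        simp only [if_true]
        ring
      · simp [hmn, Ne.symm hmn]

lemma prod_factorial_add_single (m : ι →₀ ℕ) (i : ι) :
    ∏ j, ((m + Finsupp.single i 1 : ι →₀ ℕ) j)! = (m i + 1) * ∏ j, (m j)! := by
  classical
  have hfactor (j : ι) :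
      ((m + Finsupp.single i 1 : ι →₀ ℕ) j)! = (if i = j then m j + 1 else 1) * (m j)! := by
    split_ifs with hij
    · simp [← hij, Nat.factorial_succ]
    · simp [hij]
  simp only [hfactor, Finset.prod_mul_distrib, Finset.prod_ite_eq, Finset.mem_univ, if_true]

lemma fischerForm_X_mul_left (i : ι) (P Q : MvPolynomial ι R) :
    fischerForm (X i * P) Q = fischerForm P (pderiv i Q) := by
  induction P using MvPolynomial.induction_on' with
  | add p q hp hq => simp only [mul_add, map_add, LinearMap.add_apply, hp, hq]
  | monomial m c =>
    rw [X, monomial_mul, add_comm (Finsupp.single i 1) m, fischerForm_monomial_left,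
      fischerForm_monomial_left, coeff_pderiv, prod_factorial_add_single]
    push_cast
    ring

lemma fischerForm_psum_two_mul_left (P Q : MvPolynomial ι R) :
    fischerForm (psum ι R 2 * P) Q = fischerForm P (laplacian Q) := by
  simp only [psum, Finset.sum_mul, map_sum, LinearMap.sum_apply, laplacian_apply, pow_two,
    mul_assoc, fischerForm_X_mul_left]

end CommSemiring

section Field

variable [Fintype ι] [Field K] [LinearOrder K] [IsStrictOrderedRing K]

lemma eq_zero_of_fischerForm_self_eq_zero {P : MvPolynomial ι K} (hP : fischerForm P P = 0) :
    P = 0 := by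
  have hfactorial (m : ι →₀ ℕ) : (0 : K) < (∏ i, (m i)! : ℕ) :=
    Nat.cast_pos.2 (Finset.prod_pos fun i _ => Nat.factorial_pos _)
  rw [fischerForm_eq_sum, Finset.sum_eq_zero_iff_of_nonneg] at hP
  · by_contra hne
    obtain ⟨m, hm⟩ := support_nonempty.2 hne
    exact mul_ne_zero (mem_support_iff.1 hm)
      (mul_ne_zero (hfactorial m).ne' (mem_support_iff.1 hm)) (hP m hm)
  · intro m _
    rw [mul_left_comm]
    exact mul_nonneg (hfactorial m).le (mul_self_nonneg _)

/-- Take for `psum ι K 2 * Q` the Fischer-orthogonal projection of `P`. -/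
theorem exists_isHomogeneous_laplacian_sub_psum_two_mul_eq_zero {n : ℕ} {P : MvPolynomial ι K}
    (hP : P.IsHomogeneous (n + 2)) :
    ∃ Q : MvPolynomial ι K, Q.IsHomogeneous n ∧ laplacian (P - psum ι K 2 * Q) = 0 := by
  let V := homogeneousSubmodule ι K (n + 2)
  have : FiniteDimensional K V := Module.Finite.iff_fg.2 (homogeneousSubmodule_fg _ _ _)
  have hmul {Q : MvPolynomial ι K} (hQ : Q.IsHomogeneous n) : psum ι K 2 * Q ∈ V := by
    simpa only [V, mem_homogeneousSubmodule, add_comm n 2] using (isHomogeneous_psum 2).mul hQ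
  let W : Submodule K V :=
    ((homogeneousSubmodule ι K n).map (LinearMap.mulLeft K (psum ι K 2))).comap V.subtype
  have hsymm : (fischerForm.restrict V).IsRefl := (fischerForm_isSymm.restrict V).isRefl
  have hdisj : Disjoint W ((fischerForm.restrict V).orthogonal W) := by
    rw [Submodule.disjoint_def]
    exact fun x hx hx' => Subtype.ext (eq_zero_of_fischerForm_self_eq_zero (hx' x hx))
  have hcompl := (LinearMap.BilinForm.isCompl_orthogonal_iff_disjoint hsymm).2 hdisj
  obtain ⟨w, ⟨Q, hQ, hw⟩, H, hH, hwH⟩ :=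
    Submodule.mem_sup.1 (hcompl.sup_eq_top ▸ Submodule.mem_top (x := (⟨P, hP⟩ : V)))
  have hsub : P - psum ι K 2 * Q = H := by
    rw [show psum ι K 2 * Q = w from hw, sub_eq_iff_eq_add']
    exact congrArg Subtype.val hwH.symm
  refine ⟨Q, hQ, eq_zero_of_fischerForm_self_eq_zero ?_⟩
  rw [hsub]
  have hΔ : (laplacian (H : MvPolynomial ι K)).IsHomogeneous n := isHomogeneous_laplacian H.2
  rw [← fischerForm_psum_two_mul_left]
  exact hH ⟨_, hmul hΔ⟩ ⟨_, hΔ, rfl⟩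

theorem eq_top_of_harmonic_mem_of_psum_two_mul_mem (S : Submodule K (MvPolynomial ι K))
    (hharmonic : ∀ n P, P.IsHomogeneous n → laplacian P = 0 → P ∈ S)
    (hmul : ∀ P ∈ S, psum ι K 2 * P ∈ S) : S = ⊤ := by
  have hhom (n : ℕ) (P : MvPolynomial ι K) (hP : P.IsHomogeneous n) : P ∈ S := by
    induction n using Nat.twoStepInduction generalizing P with
    | zero => exact hharmonic 0 P hP (laplacian_eq_zero_of_isHomogeneous two_pos hP)
    | one => exact hharmonic 1 P hP (laplacian_eq_zero_of_isHomogeneous one_lt_two hP)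
    | more n ih _ =>
      obtain ⟨Q, hQ, hΔ⟩ := exists_isHomogeneous_laplacian_sub_psum_two_mul_eq_zero hP
      have hmulQ : (psum ι K 2 * Q).IsHomogeneous (n + 2) := by
        simpa only [add_comm n 2] using (isHomogeneous_psum 2).mul hQ
      simpa only [sub_add_cancel] using
        S.add_mem (hharmonic _ _ (hP.sub hmulQ) hΔ) (hmul Q (ih Q hQ))
  rw [Submodule.eq_top_iff']
  intro P
  rw [← sum_homogeneousComponent P]
  exact S.sum_mem fun i _ => hhom i _ (homogeneousComponent_isHomogeneous i P)

end Field

end Fischer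

section SignedMeasure

open scoped CompactlySupported

variable {X : Type*} [MeasurableSpace X]

lemma abs_sInt_le_of_abs_le (μ : SignedMeasure X) {f : X → ℝ} {C : ℝ} (hf : ∀ x, |f x| ≤ C) :
    |sInt μ f| ≤ C * μ.totalVariation.real Set.univ := by
  have hbound (m : Measure X) [IsFiniteMeasure m] : ‖∫ x, f x ∂m‖ ≤ C * m.real Set.univ :=
    norm_integral_le_of_norm_le_const (.of_forall hf)
  rw [SignedMeasure.totalVariation, measureReal_add_apply, mul_add]
  exact (abs_sub _ _).trans (add_le_add (hbound _) (hbound _))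

lemma signedMeasure_eq_of_posPart_add_negPart_eq {μ σ : SignedMeasure X}
    (h : μ.toJordanDecomposition.posPart + σ.toJordanDecomposition.negPart =
      σ.toJordanDecomposition.posPart + μ.toJordanDecomposition.negPart) : μ = σ := by
  rw [← μ.toSignedMeasure_toJordanDecomposition, ← σ.toSignedMeasure_toJordanDecomposition,
    JordanDecomposition.toSignedMeasure, JordanDecomposition.toSignedMeasure,
    sub_eq_sub_iff_add_eq_add, ← Measure.toSignedMeasure_add, ← Measure.toSignedMeasure_add]
  exact Measure.toSignedMeasure_congr h

variable [TopologicalSpace X]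

/-- The integral `sInt μ` against a signed measure, as a linear functional on `C_c(X, ℝ)`. -/
def sIntLinearMap [OpensMeasurableSpace X] (μ : SignedMeasure X) : C_c(X, ℝ) →ₗ[ℝ] ℝ :=
  (CompactlySupportedContinuousMap.integralPositiveLinearMap
      μ.toJordanDecomposition.posPart).toLinearMap -
    (CompactlySupportedContinuousMap.integralPositiveLinearMap
      μ.toJordanDecomposition.negPart).toLinearMap

lemma sIntLinearMap_apply [OpensMeasurableSpace X] (μ : SignedMeasure X) (f : C_c(X, ℝ)) :
    sIntLinearMap μ f = sInt μ f := rfl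

lemma sIntLinearMap_eq_of_eqOn_uniformly_dense [OpensMeasurableSpace X] {μ σ : SignedMeasure X}
    {S : Set C_c(X, ℝ)} (hS : ∀ (f : C_c(X, ℝ)) (ε : ℝ), 0 < ε → ∃ g ∈ S, ∀ x, |f x - g x| ≤ ε)
    (h : Set.EqOn (sIntLinearMap μ) (sIntLinearMap σ) S) :
    sIntLinearMap μ = sIntLinearMap σ := by
  ext f
  refine eq_of_forall_dist_le fun δ hδ => ?_
  obtain ⟨ε, hε, hεδ⟩ := exists_pos_mul_lt hδ
    (μ.totalVariation.real Set.univ + σ.totalVariation.real Set.univ)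
  obtain ⟨g, hgS, hg⟩ := hS f ε hε
  calc dist (sIntLinearMap μ f) (sIntLinearMap σ f)
      = |sInt μ (f - g) - sInt σ (f - g)| := by
        rw [Real.dist_eq, ← sIntLinearMap_apply, ← sIntLinearMap_apply, map_sub, map_sub, h hgS,
          sub_sub_sub_cancel_right]
    _ ≤ ε * μ.totalVariation.real Set.univ + ε * σ.totalVariation.real Set.univ :=
        (abs_sub _ _).trans
          (add_le_add (abs_sInt_le_of_abs_le μ hg) (abs_sInt_le_of_abs_le σ hg))
    _ ≤ δ := by linarith

lemma sIntLinearMap_injective [T2Space X] [LocallyCompactSpace X] [SigmaCompactSpace X]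
    [TopologicalSpace.PseudoMetrizableSpace X] [BorelSpace X] :
    Function.Injective (sIntLinearMap (X := X)) := by
  intro μ σ h
  refine signedMeasure_eq_of_posPart_add_negPart_eq
    (Measure.ext_of_integral_eq_on_compactlySupported fun f => ?_)
  rw [integral_add_measure f.integrable f.integrable,
    integral_add_measure f.integrable f.integrable, ← sub_eq_sub_iff_add_eq_add]
  exact LinearMap.congr_fun h f

end SignedMeasure

section Polynomial

open scoped CompactlySupported

variable {ι : Type*}

/-- The algebra homomorphism sending a polynomial to its function on Euclidean space. -/
def polynomialMap : MvPolynomial ι ℝ →ₐ[ℝ] C(EuclideanSpace ℝ ι, ℝ) where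
  toFun P := ⟨fun x => eval (fun i => x i) P, P.continuous_eval.comp (by fun_prop)⟩
  map_one' := by ext; simp
  map_mul' P Q := by ext; simp
  map_zero' := by ext; simp
  map_add' P Q := by ext; simp
  commutes' c := by ext; simp

lemma polynomialMap_apply (P : MvPolynomial ι ℝ) (x : EuclideanSpace ℝ ι) :
    polynomialMap P x = eval (fun i => x i) P := rfl

lemma separatesPoints_range_polynomialMap :
    (polynomialMap (ι := ι)).range.SeparatesPoints := by
  intro x y hxy
  obtain ⟨i, hi⟩ : ∃ i, x i ≠ y i := by
    by_contra! hcoord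
    exact hxy (PiLp.ext hcoord)
  exact ⟨_, ⟨polynomialMap (X i), ⟨X i, rfl⟩, rfl⟩, by simpa [polynomialMap_apply] using hi⟩

lemma polynomialMap_psum_two [Fintype ι] (x : EuclideanSpace ℝ ι) :
    polynomialMap (psum ι ℝ 2) x = ‖x‖ ^ 2 := by
  simp [polynomialMap_apply, psum, EuclideanSpace.norm_sq_eq]

/-- The norm as a cocompact map: radial functions are obtained by composition with it. -/
def normCocompactMap (V : Type*) [NormedAddCommGroup V] [ProperSpace V] : CocompactMap V ℝ where
  toFun := norm
  continuous_toFun := continuous_norm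
  cocompact_tendsto' := tendsto_norm_cocompact_atTop.mono_right atTop_le_cocompact

variable [Fintype ι]

/-- The compactly supported function `x ↦ g(|x|) P(x)`, as a linear map in `P`. -/
def radialMul (g : C_c(ℝ, ℝ)) : MvPolynomial ι ℝ →ₗ[ℝ] C_c(EuclideanSpace ℝ ι, ℝ) where
  toFun P :=
    { toFun x := g ‖x‖ * polynomialMap P x
      continuous_toFun := (g.continuous.comp continuous_norm).mul (polynomialMap P).continuous
      hasCompactSupport' :=
        (g.comp (normCocompactMap (EuclideanSpace ℝ ι))).hasCompactSupport.mul_right }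
  map_add' P Q := by simp only [map_add]; ext; exact mul_add _ _ _
  map_smul' c P := by simp only [map_smul]; ext; exact mul_left_comm _ _ _

lemma radialMul_apply (g : C_c(ℝ, ℝ)) (P : MvPolynomial ι ℝ) (x : EuclideanSpace ℝ ι) :
    radialMul g P x = g ‖x‖ * polynomialMap P x := rfl

lemma radialMul_psum_two_mul (g : C_c(ℝ, ℝ)) (P : MvPolynomial ι ℝ) :
    radialMul g (psum ι ℝ 2 * P) = radialMul (ContinuousMap.id ℝ ^ 2 • g) P := by
  ext x
  simp only [radialMul_apply, map_mul, ContinuousMap.mul_apply, polynomialMap_psum_two,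
    CompactlySupportedContinuousMap.smulc_apply, ContinuousMap.pow_apply, ContinuousMap.id_apply,
    smul_eq_mul]
  ring

lemma exists_radialMul_near (f : C_c(EuclideanSpace ℝ ι, ℝ)) {ε : ℝ} (hε : 0 < ε) :
    ∃ (g : C_c(ℝ, ℝ)) (P : MvPolynomial ι ℝ), ∀ x, |f x - radialMul g P x| ≤ ε := by
  obtain ⟨χ, hχ_one, -, hχ_supp, hχ_mem⟩ := exists_continuous_one_zero_of_isCompact
    (f.hasCompactSupport.isCompact.image continuous_norm) isClosed_empty (Set.disjoint_empty _)
  let g : C_c(ℝ, ℝ) := ⟨χ, hχ_supp⟩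
  let radialCutoff : C_c(EuclideanSpace ℝ ι, ℝ) := g.comp (normCocompactMap _)
  obtain ⟨_, ⟨P, rfl⟩, hP⟩ :=
    ContinuousMap.exists_mem_subalgebra_near_continuous_of_isCompact_of_separatesPoints
      separatesPoints_range_polynomialMap (f : C(EuclideanSpace ℝ ι, ℝ))
      radialCutoff.hasCompactSupport.isCompact hε
  refine ⟨g, P, fun x => ?_⟩
  have hf : f x = g ‖x‖ * f x := by
    by_cases hx : x ∈ tsupport f
    · rw [show g ‖x‖ = 1 from hχ_one ⟨x, hx, rfl⟩, one_mul]
    · rw [image_eq_zero_of_notMem_tsupport hx, mul_zero]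
  have hχ_nonneg : 0 ≤ g ‖x‖ := (hχ_mem _).1
  have hχ_le_one : g ‖x‖ ≤ 1 := (hχ_mem _).2
  calc |f x - radialMul g P x| = g ‖x‖ * |polynomialMap P x - f x| := by
        conv_lhs => rw [hf, radialMul_apply, ← mul_sub, abs_mul, abs_of_nonneg hχ_nonneg]
        rw [abs_sub_comm]
    _ ≤ ε := ?_
  by_cases hx : x ∈ tsupport radialCutoff
  · exact (mul_le_of_le_one_left (abs_nonneg _) hχ_le_one).trans (hP x hx).le
  · rw [show g ‖x‖ = 0 from image_eq_zero_of_notMem_tsupport (f := radialCutoff) hx, zero_mul]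
    exact hε.le

theorem signedMeasure_eq_of_sInt_radialMul_harmonic_eq {μ σ : SignedMeasure (EuclideanSpace ℝ ι)}
    (h : ∀ (g : C_c(ℝ, ℝ)) (n : ℕ) (P : MvPolynomial ι ℝ), P.IsHomogeneous n → laplacian P = 0 →
      sInt μ (radialMul g P) = sInt σ (radialMul g P)) : μ = σ := by
  let S : Submodule ℝ (MvPolynomial ι ℝ) :=
    ⨅ g, (sIntLinearMap μ ∘ₗ radialMul g).eqLocus (sIntLinearMap σ ∘ₗ radialMul g)
  have hS {P : MvPolynomial ι ℝ} :
      P ∈ S ↔ ∀ g, sInt μ (radialMul g P) = sInt σ (radialMul g P) := Submodule.mem_iInf _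
  have hS_top : S = ⊤ := by
    refine eq_top_of_harmonic_mem_of_psum_two_mul_mem S
      (fun n P hP hΔ => hS.2 fun g => h g n P hP hΔ) fun P hP => hS.2 fun g => ?_
    rw [radialMul_psum_two_mul]
    exact hS.1 hP _
  refine sIntLinearMap_injective (sIntLinearMap_eq_of_eqOn_uniformly_dense
    (S := {f | ∃ g P, radialMul g P = f}) (fun f ε hε => ?_) ?_)
  · obtain ⟨g, P, hgP⟩ := exists_radialMul_near f hε
    exact ⟨_, ⟨g, P, rfl⟩, hgP⟩
  · rintro _ ⟨g, P, rfl⟩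
    exact hS.1 (hS_top ▸ Submodule.mem_top) g

end Polynomial

theorem statement11_general {d : ℕ} (B : HarmonicBasis d) (μ σ : SignedMeasure (E d))
    (h : ∀ (k : ℕ) (l : Fin (B.a k)) (g : ℝ → ℝ), Continuous g → HasCompactSupport g →
      sInt μ (fun x => g ‖x‖ * B.Yf k l x) = sInt σ (fun x => g ‖x‖ * B.Yf k l x)) :
    μ = σ := by
  refine signedMeasure_eq_of_sInt_radialMul_harmonic_eq fun g k P hP hΔ => ?_
  have hspan : Submodule.span ℝ (Set.range (B.Y k)) ≤
      (sIntLinearMap μ ∘ₗ radialMul g).eqLocus (sIntLinearMap σ ∘ₗ radialMul g) := by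
    rw [Submodule.span_le, Set.range_subset_iff]
    exact fun l => h k l g g.continuous g.hasCompactSupport
  exact hspan (B.complete k P (by rwa [← laplacian_apply]) hP)

theorem statement11 {d : ℕ} (hd : 1 ≤ d) (B : HarmonicBasis d)
    (μ σ : SignedMeasure (E d)) (hμm : IsMomentMeasure μ) (hσm : IsMomentMeasure σ)
    (hμp : B.PseudoPositive μ) (hσp : B.PseudoPositive σ)
    (ν ρ : (k : ℕ) → Fin (B.a k) → Measure ℝ)
    (hν : B.IsComponentFamily μ ν) (hρ : B.IsComponentFamily σ ρ)
    (h : ∀ k l, ν k l = ρ k l) : μ = σ :=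
  statement11_general B μ σ fun k l g hg hg_supp => by
    rw [← (hν k l).2 g hg hg_supp, ← (hρ k l).2 g hg hg_supp, h k l]
end
end
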